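/- Let Ψ ∈ ℝ^{m×d} satisfy the restricted isometry property of order 2k with constant δ ∈ [0,1]. Then for every 2k×2k-sparse matrix X ∈ ℝ^{d×d}, one has (1−δ)²‖X‖_F² ≤ ‖Ψ X Ψᵀ‖_F² ≤ (1+δ)²‖X‖_F². -/

import Mathlib

/-!
The squared Frobenius norm is the sum of the squared Euclidean norms of the columns. If the nonzero
rows of `Y` lie in a set of at most `K` indices, every column of `Y` is `K`-sparse, so summing the
restricted isometry inequalities over the columns bounds `‖Ψ Y‖_F²` between `(1 - δ) ‖Y‖_F²` and
`(1 + δ) ‖Y‖_F²` (`RIP.frobNorm_mul`). This applies to `Y = X`, and then to `Y = (Ψ X)ᵀ`, whose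
nonzero rows lie in the column support of `X`; since `Ψ (Ψ X)ᵀ = (Ψ X Ψᵀ)ᵀ`, composing the two
bounds gives the claim.
-/

open Matrix

noncomputable section

/-- The Euclidean (`ℓ₂`) norm of a vector in `ℝ^n`. -/
def l2Norm {n : ℕ} (x : Fin n → ℝ) : ℝ := Real.sqrt (∑ i, (x i) ^ 2)

/-- The Frobenius norm of a real matrix. -/
def frobNorm {m n : ℕ} (M : Matrix (Fin m) (Fin n) ℝ) : ℝ :=
  Real.sqrt (∑ i, ∑ j, (M i j) ^ 2)

/-- A vector `x ∈ ℝ^d` is `k`-sparse: it has at most `k` nonzero entries. -/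
def SparseVec {d : ℕ} (k : ℕ) (x : Fin d → ℝ) : Prop :=
  ∃ s : Finset (Fin d), s.card ≤ k ∧ ∀ i, x i ≠ 0 → i ∈ s

/-- A matrix `X ∈ ℝ^{d×d}` is `k×k`-sparse: all of its nonzero entries lie in a submatrix
indexed by `S×T` with `|S| ≤ k` and `|T| ≤ k`. -/
def SparseMat {d : ℕ} (k : ℕ) (X : Matrix (Fin d) (Fin d) ℝ) : Prop :=
  ∃ S T : Finset (Fin d), S.card ≤ k ∧ T.card ≤ k ∧
    ∀ i j, X i j ≠ 0 → i ∈ S ∧ j ∈ T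

/-- `Ψ ∈ ℝ^{m×d}` satisfies the restricted isometry property of order `k` with constant `δ`:
`(1−δ)‖x‖₂² ≤ ‖Ψx‖₂² ≤ (1+δ)‖x‖₂²` for all `k`-sparse vectors `x`. -/
def RIP {m d : ℕ} (k : ℕ) (Ψ : Matrix (Fin m) (Fin d) ℝ) (δ : ℝ) : Prop :=
  ∀ x : Fin d → ℝ, SparseVec k x →
    (1 - δ) * (l2Norm x) ^ 2 ≤ (l2Norm (Ψ.mulVec x)) ^ 2 ∧
    (l2Norm (Ψ.mulVec x)) ^ 2 ≤ (1 + δ) * (l2Norm x) ^ 2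

theorem l2Norm_sq {n : ℕ} (x : Fin n → ℝ) : l2Norm x ^ 2 = ∑ i, x i ^ 2 :=
  Real.sq_sqrt (Finset.sum_nonneg fun _ _ => sq_nonneg _)

theorem frobNorm_sq {m n : ℕ} (M : Matrix (Fin m) (Fin n) ℝ) :
    frobNorm M ^ 2 = ∑ i, ∑ j, M i j ^ 2 :=
  Real.sq_sqrt (Finset.sum_nonneg fun _ _ => Finset.sum_nonneg fun _ _ => sq_nonneg _)

theorem frobNorm_transpose {m n : ℕ} (M : Matrix (Fin m) (Fin n) ℝ) :
    frobNorm Mᵀ = frobNorm M := by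
  unfold frobNorm
  rw [Finset.sum_comm]
  rfl

theorem frobNorm_sq_eq_sum_col {m n : ℕ} (M : Matrix (Fin m) (Fin n) ℝ) :
    frobNorm M ^ 2 = ∑ j, l2Norm (fun i => M i j) ^ 2 := by
  simp only [frobNorm_sq, l2Norm_sq]
  exact Finset.sum_comm

/-- The restricted isometry inequalities extend from sparse vectors to matrices with few nonzero
rows, column by column. -/
theorem RIP.frobNorm_mul {m d n K : ℕ} {Ψ : Matrix (Fin m) (Fin d) ℝ} {δ : ℝ} (h : RIP K Ψ δ)
    (Y : Matrix (Fin d) (Fin n) ℝ) (S : Finset (Fin d)) (hS : S.card ≤ K)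
    (hY : ∀ i j, Y i j ≠ 0 → i ∈ S) :
    (1 - δ) * frobNorm Y ^ 2 ≤ frobNorm (Ψ * Y) ^ 2 ∧
    frobNorm (Ψ * Y) ^ 2 ≤ (1 + δ) * frobNorm Y ^ 2 := by
  have hcol (j : Fin n) := h (fun i => Y i j) ⟨S, hS, fun i hi => hY i j hi⟩
  rw [frobNorm_sq_eq_sum_col, frobNorm_sq_eq_sum_col, Finset.mul_sum, Finset.mul_sum]
  exact ⟨Finset.sum_le_sum fun j _ => (hcol j).1, Finset.sum_le_sum fun j _ => (hcol j).2⟩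

/-- If `Ψ` satisfies the RIP of order `2k` with constant `δ ∈ [0,1]`, then for every
`2k×2k`-sparse matrix `X ∈ ℝ^{d×d}`,
`(1−δ)²‖X‖_F² ≤ ‖Ψ X Ψᵀ‖_F² ≤ (1+δ)²‖X‖_F²`. -/
theorem stmt_6 {m d k : ℕ} (Ψ : Matrix (Fin m) (Fin d) ℝ) (δ : ℝ)
    (hδ0 : 0 ≤ δ) (hδ1 : δ ≤ 1) (hRIP : RIP (2 * k) Ψ δ)
    (X : Matrix (Fin d) (Fin d) ℝ) (hX : SparseMat (2 * k) X) :
    (1 - δ) ^ 2 * (frobNorm X) ^ 2 ≤ (frobNorm (Ψ * X * Ψᵀ)) ^ 2 ∧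
    (frobNorm (Ψ * X * Ψᵀ)) ^ 2 ≤ (1 + δ) ^ 2 * (frobNorm X) ^ 2 := by
  obtain ⟨S, T, hS, hT, hST⟩ := hX
  obtain ⟨h1, h2⟩ := hRIP.frobNorm_mul X S hS fun i j hij => (hST i j hij).1
  have hsupp : ∀ j i, (Ψ * X)ᵀ j i ≠ 0 → j ∈ T := by
    intro j i hne
    by_contra hj
    refine hne ?_
    rw [Matrix.transpose_apply, Matrix.mul_apply]
    refine Finset.sum_eq_zero fun l _ => ?_
    have hl : X l j = 0 := by
      by_contra h0
      exact hj (hST l j h0).2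
    simp [hl]
  obtain ⟨h3, h4⟩ := hRIP.frobNorm_mul (Ψ * X)ᵀ T hT hsupp
  have htr : Ψ * (Ψ * X)ᵀ = (Ψ * X * Ψᵀ)ᵀ := by
    rw [Matrix.transpose_mul (Ψ * X), Matrix.transpose_transpose]
  rw [htr, frobNorm_transpose, frobNorm_transpose] at h3 h4
  have hl := mul_le_mul_of_nonneg_left h1 (sub_nonneg.2 hδ1)
  have hu := mul_le_mul_of_nonneg_left h2 (by linarith : 0 ≤ 1 + δ)
  constructor <;> nlinarith

end
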